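/- Let ν ≥ 1 be an integer and let a, b > 0 with a ≠ b be two zeros of J_ν (i.e. J_ν(a) = J_ν(b) = 0). Then (a^2 − b^2) ∫_0^1 r^3 J_ν(a r) J_ν(b r) dr = 4 a ∫_0^1 r^2 J_{ν−1}(a r) J_ν(b r) dr. -/

import Mathlib

open MeasureTheory

/-- Bessel function of the first kind of integer order `ν`, defined by its
everywhere-convergent power series. -/
noncomputable def besselJ (ν : ℕ) (x : ℝ) : ℝ :=
  ∑' m : ℕ, ((-1 : ℝ) ^ m / ((Nat.factorial m : ℝ) * (Nat.factorial (m + ν) : ℝ)))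
    * (x / 2) ^ (2 * m + ν)

/-!
Put `u r = J_ν (a r)`, `v r = J_ν (b r)`, and let `W = r (u v' - u' v)`. Bessel's equation gives
Lommel's identity `W' = (a² - b²) r u v`. As `W` vanishes at `0` and `1`, its first consequence is
the orthogonality `∫ r u v = 0`. Its second, by parts, is
`(a² - b²) ∫ r³ u v = ∫ r² W' = -2 ∫ r W`. The recurrence for `J_ν'` rewrites `r W` as
`(r² u v)' - 2 a r² J_{ν-1}(a r) v + 2 (ν - 1) r u v`, whose outer terms integrate to zero.
-/

open scoped Nat

section EntireSeries

theorem natCast_mul_pow_sub_one_le_add_one_pow {R : ℝ} (hR : 0 ≤ R) (m : ℕ) :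
    m * R ^ (m - 1) ≤ (R + 1) ^ m := by
  rcases m with _ | m
  · simp
  · have h := Finset.single_le_sum (f := fun k ↦ R ^ k * 1 ^ (m + 1 - k) * ((m + 1).choose k : ℝ))
      (fun k _ ↦ by positivity) (Finset.mem_range.2 (by lia : m < m + 1 + 1))
    rw [← add_pow] at h
    simpa [mul_comm] using h

variable {𝕜 : Type*} [RCLike 𝕜] {c : ℕ → 𝕜}

theorem hasDerivAt_tsum_mul_pow (hc : ∀ x, Summable fun m ↦ c m * x ^ m) (x : 𝕜) :
    HasDerivAt (fun y ↦ ∑' m, c m * y ^ m) (∑' m : ℕ, (m + 1) * c (m + 1) * x ^ m) x := by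
  set R : ℝ := ‖x‖ + 1
  have hR : 0 ≤ R := by positivity
  have hx : x ∈ Metric.ball (0 : 𝕜) R := by simp [R]
  have norm_deriv_le (m : ℕ) (y : 𝕜) (hy : y ∈ Metric.ball 0 R) :
      ‖c m * (m * y ^ (m - 1))‖ ≤ ‖c m * ((R + 1 : ℝ) : 𝕜) ^ m‖ := by
    have hyR : ‖y‖ ≤ R := (mem_ball_zero_iff.1 hy).le
    calc ‖c m * (m * y ^ (m - 1))‖ = ‖c m‖ * (m * ‖y‖ ^ (m - 1)) := by simp
      _ ≤ ‖c m‖ * (m * R ^ (m - 1)) := by gcongr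
      _ ≤ ‖c m‖ * (R + 1) ^ m := by gcongr; exact natCast_mul_pow_sub_one_le_add_one_pow hR m
      _ = ‖c m * ((R + 1 : ℝ) : 𝕜) ^ m‖ := by
        rw [norm_mul, norm_pow, RCLike.norm_of_nonneg (by positivity)]
  have hbound : Summable fun m ↦ ‖c m * ((R + 1 : ℝ) : 𝕜) ^ m‖ := (hc _).norm
  have hderiv := hasDerivAt_tsum_of_isPreconnected hbound Metric.isOpen_ball
    (convex_ball (0 : 𝕜) R).isPreconnected (fun m y _ ↦ (hasDerivAt_pow m y).const_mul (c m))
    norm_deriv_le hx (hc x) hx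
  have hsum : Summable fun m : ℕ ↦ c m * (m * x ^ (m - 1)) :=
    .of_norm_bounded hbound fun m ↦ norm_deriv_le m x hx
  refine hderiv.congr_deriv ?_
  rw [hsum.tsum_eq_zero_add]
  simp [mul_left_comm, mul_assoc]

end EntireSeries

section BesselClifford

/-- The coefficient of `t ^ m` in the entire function `besselClifford ν`. -/
noncomputable def besselCliffordCoeff (ν m : ℕ) : ℝ := (-1) ^ m / (m ! * (m + ν)!)

/-- The Bessel–Clifford function with the sign of its argument reversed, so that
`J_ν (x) = (x / 2) ^ ν * besselClifford ν ((x / 2) ^ 2)`; it separates off the power of `x` and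
leaves a plain power series. -/
noncomputable def besselClifford (ν : ℕ) (t : ℝ) : ℝ := ∑' m, besselCliffordCoeff ν m * t ^ m

theorem succ_mul_besselCliffordCoeff_succ (ν m : ℕ) :
    (m + 1) * besselCliffordCoeff ν (m + 1) = -besselCliffordCoeff (ν + 1) m := by
  rw [besselCliffordCoeff, besselCliffordCoeff, add_right_comm m 1 ν, ← add_assoc m ν 1,
    Nat.factorial_succ m]
  push_cast
  field_simp
  ring

theorem besselCliffordCoeff_eq_mul_order_succ (ν m : ℕ) :
    besselCliffordCoeff ν m = (m + ν + 1) * besselCliffordCoeff (ν + 1) m := by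
  rw [besselCliffordCoeff, besselCliffordCoeff, ← add_assoc m ν 1, Nat.factorial_succ (m + ν)]
  push_cast
  field_simp

theorem besselCliffordCoeff_succ (ν m : ℕ) :
    besselCliffordCoeff ν (m + 1) =
      (ν + 1) * besselCliffordCoeff (ν + 1) (m + 1) - besselCliffordCoeff (ν + 2) m := by
  have horder := besselCliffordCoeff_eq_mul_order_succ ν (m + 1)
  push_cast at horder
  linear_combination horder + succ_mul_besselCliffordCoeff_succ (ν + 1) m

theorem abs_besselCliffordCoeff_le (ν m : ℕ) : |besselCliffordCoeff ν m| ≤ 1 / m ! := by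
  have hfac : (1 : ℝ) ≤ (m + ν)! := mod_cast Nat.factorial_pos _
  rw [besselCliffordCoeff, abs_div, abs_neg_one_pow, abs_of_pos (by positivity)]
  gcongr
  exact le_mul_of_one_le_right (by positivity) hfac

theorem summable_besselCliffordCoeff_mul_pow (ν : ℕ) (t : ℝ) :
    Summable fun m ↦ besselCliffordCoeff ν m * t ^ m := by
  refine .of_norm_bounded (Real.summable_pow_div_factorial |t|) fun m ↦ ?_
  calc ‖besselCliffordCoeff ν m * t ^ m‖ = |besselCliffordCoeff ν m| * |t| ^ m := by simp
    _ ≤ 1 / m ! * |t| ^ m := by gcongr; exact abs_besselCliffordCoeff_le ν m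
    _ = |t| ^ m / m ! := one_div_mul_eq_div _ _

theorem hasDerivAt_besselClifford (ν : ℕ) (t : ℝ) :
    HasDerivAt (besselClifford ν) (-besselClifford (ν + 1) t) t := by
  refine (hasDerivAt_tsum_mul_pow (summable_besselCliffordCoeff_mul_pow ν) t).congr_deriv ?_
  simp only [succ_mul_besselCliffordCoeff_succ, neg_mul, tsum_neg, besselClifford]

theorem besselClifford_eq_sub (ν : ℕ) (t : ℝ) :
    besselClifford ν t = (ν + 1) * besselClifford (ν + 1) t - t * besselClifford (ν + 2) t := by
  have hsum (μ : ℕ) := summable_besselCliffordCoeff_mul_pow μ t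
  have htail (m : ℕ) : besselCliffordCoeff ν (m + 1) * t ^ (m + 1) =
      (ν + 1) * (besselCliffordCoeff (ν + 1) (m + 1) * t ^ (m + 1)) -
        t * (besselCliffordCoeff (ν + 2) m * t ^ m) := by
    rw [besselCliffordCoeff_succ]
    ring
  have hhead := besselCliffordCoeff_eq_mul_order_succ ν 0
  simp only [besselClifford]
  rw [(hsum ν).tsum_eq_zero_add, (hsum (ν + 1)).tsum_eq_zero_add, tsum_congr htail,
    (((summable_nat_add_iff 1).2 (hsum (ν + 1))).mul_left _).tsum_sub ((hsum (ν + 2)).mul_left _),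
    tsum_mul_left, tsum_mul_left, hhead]
  push_cast
  ring

end BesselClifford

section BesselJ

theorem besselJ_eq_pow_mul_besselClifford (ν : ℕ) (x : ℝ) :
    besselJ ν x = (x / 2) ^ ν * besselClifford ν ((x / 2) ^ 2) := by
  rw [besselJ, besselClifford, ← tsum_mul_left]
  refine tsum_congr fun m ↦ ?_
  rw [besselCliffordCoeff, pow_add, pow_mul]
  ring

theorem mul_besselJ_add_besselJ (ν : ℕ) (x : ℝ) :
    x * (besselJ ν x + besselJ (ν + 2) x) = 2 * (ν + 1) * besselJ (ν + 1) x := by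
  simp only [besselJ_eq_pow_mul_besselClifford, besselClifford_eq_sub ν]
  ring

theorem hasDerivAt_besselJ (ν : ℕ) (x : ℝ) :
    HasDerivAt (besselJ ν)
      (ν / 2 * (x / 2) ^ (ν - 1) * besselClifford ν ((x / 2) ^ 2) - besselJ (ν + 1) x) x := by
  have hhalf : HasDerivAt (fun y : ℝ ↦ y / 2) (1 / 2) x := (hasDerivAt_id x).div_const 2
  have hprod := (hhalf.fun_pow ν).mul
    ((hasDerivAt_besselClifford ν ((x / 2) ^ 2)).comp x (hhalf.fun_pow 2))
  rw [funext (besselJ_eq_pow_mul_besselClifford ν)]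
  refine hprod.congr_deriv ?_
  simp only [Function.comp_apply, besselJ_eq_pow_mul_besselClifford (ν + 1)]
  push_cast
  ring

theorem differentiable_besselJ (ν : ℕ) : Differentiable ℝ (besselJ ν) :=
  fun x ↦ (hasDerivAt_besselJ ν x).differentiableAt

@[fun_prop]
theorem continuous_besselJ (ν : ℕ) : Continuous (besselJ ν) :=
  (differentiable_besselJ ν).continuous

theorem mul_deriv_besselJ (ν : ℕ) (x : ℝ) :
    x * deriv (besselJ ν) x = ν * besselJ ν x - x * besselJ (ν + 1) x := by
  rw [(hasDerivAt_besselJ ν x).deriv, besselJ_eq_pow_mul_besselClifford ν]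
  rcases ν with _ | ν
  · simp
  · push_cast [Nat.add_sub_cancel]
    ring

theorem mul_deriv_besselJ_succ (ν : ℕ) (x : ℝ) :
    x * deriv (besselJ (ν + 1)) x = x * besselJ ν x - (ν + 1) * besselJ (ν + 1) x := by
  have hderiv := mul_deriv_besselJ (ν + 1) x
  push_cast at hderiv
  linear_combination hderiv - mul_besselJ_add_besselJ ν x

theorem hasDerivAt_besselJ_const_mul (ν : ℕ) (a r : ℝ) :
    HasDerivAt (fun s ↦ besselJ ν (a * s)) (a * deriv (besselJ ν) (a * r)) r := by
  simpa [Function.comp_def, mul_comm (deriv _ _)] using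
    (differentiable_besselJ ν (a * r)).hasDerivAt.comp r ((hasDerivAt_id r).const_mul a)

end BesselJ

section Lommel

/-- The Wronskian `u v' - u' v` of `u r = J_ν (a r)` and `v r = J_ν (b r)`, multiplied by `r` and
with the derivatives expressed through `J_{ν+1}`; it is an antiderivative of
`(a² - b²) r u v`. -/
noncomputable def besselWronskian (ν : ℕ) (a b r : ℝ) : ℝ :=
  r * (a * besselJ (ν + 1) (a * r) * besselJ ν (b * r) -
    b * besselJ ν (a * r) * besselJ (ν + 1) (b * r))

theorem besselWronskian_eq_zero {ν : ℕ} {a b r : ℝ} (ha : besselJ ν (a * r) = 0)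
    (hb : besselJ ν (b * r) = 0) : besselWronskian ν a b r = 0 := by
  simp [besselWronskian, ha, hb]

theorem hasDerivAt_besselWronskian (ν : ℕ) (a b r : ℝ) :
    HasDerivAt (besselWronskian ν a b)
      ((a ^ 2 - b ^ 2) * (r * besselJ ν (a * r) * besselJ ν (b * r))) r := by
  have hd (μ : ℕ) (k : ℝ) := hasDerivAt_besselJ_const_mul μ k r
  refine ((hasDerivAt_id r).mul
    ((((hd (ν + 1) a).const_mul a).mul (hd ν b)).sub
      (((hd ν a).const_mul b).mul (hd (ν + 1) b)))).congr_deriv ?_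
  simp only [id, Pi.mul_apply, Pi.sub_apply]
  linear_combination
    a * besselJ ν (b * r) * mul_deriv_besselJ_succ ν (a * r) +
    a * besselJ (ν + 1) (a * r) * mul_deriv_besselJ ν (b * r) -
    b * besselJ (ν + 1) (b * r) * mul_deriv_besselJ ν (a * r) -
    b * besselJ ν (a * r) * mul_deriv_besselJ_succ ν (b * r)

theorem integral_mul_besselJ_mul_besselJ (ν : ℕ) (a b x y : ℝ) :
    (a ^ 2 - b ^ 2) * ∫ r in x..y, r * besselJ ν (a * r) * besselJ ν (b * r) =
      besselWronskian ν a b y - besselWronskian ν a b x := by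
  rw [← intervalIntegral.integral_const_mul]
  exact intervalIntegral.integral_eq_sub_of_hasDerivAt
    (fun r _ ↦ hasDerivAt_besselWronskian ν a b r)
    (Continuous.intervalIntegrable (by fun_prop) _ _)

theorem integral_mul_besselJ_mul_besselJ_eq_zero {ν : ℕ} {a b R : ℝ} (hab : a ^ 2 ≠ b ^ 2)
    (ha : besselJ ν (a * R) = 0) (hb : besselJ ν (b * R) = 0) :
    ∫ r in (0 : ℝ)..R, r * besselJ ν (a * r) * besselJ ν (b * r) = 0 := by
  have hLommel := integral_mul_besselJ_mul_besselJ ν a b 0 R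
  rw [besselWronskian_eq_zero ha hb, besselWronskian, zero_mul, sub_zero] at hLommel
  exact (mul_eq_zero.1 hLommel).resolve_left (sub_ne_zero.2 hab)

theorem hasDerivAt_sq_mul_besselWronskian_sub (n : ℕ) (a b r : ℝ) :
    HasDerivAt
      (fun s ↦ s ^ 2 * (besselWronskian (n + 1) a b s -
        2 * (besselJ (n + 1) (a * s) * besselJ (n + 1) (b * s))))
      ((a ^ 2 - b ^ 2) * (r ^ 3 * besselJ (n + 1) (a * r) * besselJ (n + 1) (b * r)) -
        4 * a * (r ^ 2 * besselJ n (a * r) * besselJ (n + 1) (b * r)) +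
        4 * n * (r * besselJ (n + 1) (a * r) * besselJ (n + 1) (b * r))) r := by
  have hd (k : ℝ) := hasDerivAt_besselJ_const_mul (n + 1) k r
  refine ((hasDerivAt_pow 2 r).mul ((hasDerivAt_besselWronskian (n + 1) a b r).sub
    (((hd a).mul (hd b)).const_mul 2))).congr_deriv ?_
  have hva := mul_deriv_besselJ_succ n (a * r)
  have hvb := mul_deriv_besselJ (n + 1) (b * r)
  have hra := mul_besselJ_add_besselJ n (a * r)
  simp only [besselWronskian, Pi.mul_apply, Pi.sub_apply]
  push_cast at hvb ⊢
  linear_combination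
    -2 * r * besselJ (n + 1) (b * r) * hva - 2 * r * besselJ (n + 1) (a * r) * hvb +
    2 * r * besselJ (n + 1) (b * r) * hra

theorem integral_cube_mul_besselJ_mul_besselJ (n : ℕ) (a b R : ℝ) :
    (a ^ 2 - b ^ 2) *
        (∫ r in (0 : ℝ)..R, r ^ 3 * besselJ (n + 1) (a * r) * besselJ (n + 1) (b * r)) -
      4 * a * (∫ r in (0 : ℝ)..R, r ^ 2 * besselJ n (a * r) * besselJ (n + 1) (b * r)) +
      4 * n * (∫ r in (0 : ℝ)..R, r * besselJ (n + 1) (a * r) * besselJ (n + 1) (b * r)) =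
    R ^ 2 * (besselWronskian (n + 1) a b R -
      2 * (besselJ (n + 1) (a * R) * besselJ (n + 1) (b * R))) := by
  have hint {f : ℝ → ℝ} (hf : Continuous f) : IntervalIntegrable f volume 0 R :=
    hf.intervalIntegrable _ _
  have hFTC := intervalIntegral.integral_eq_sub_of_hasDerivAt (a := 0) (b := R)
    (fun r _ ↦ hasDerivAt_sq_mul_besselWronskian_sub n a b r) (hint (by fun_prop))
  rw [intervalIntegral.integral_add (hint (by fun_prop)) (hint (by fun_prop)),
    intervalIntegral.integral_sub (hint (by fun_prop)) (hint (by fun_prop))] at hFTC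
  simpa only [intervalIntegral.integral_const_mul, ne_eq, OfNat.ofNat_ne_zero, not_false_eq_true,
    zero_pow, zero_mul, sub_zero] using hFTC

end Lommel

/-- If `ν ≥ 1` and `a ≠ b` are positive zeros of `J_ν` then
`(a² - b²) ∫_0^1 r³ J_ν(ar) J_ν(br) dr = 4a ∫_0^1 r² J_{ν-1}(ar) J_ν(br) dr`. -/
theorem stmt5 (ν : ℕ) (hν : 1 ≤ ν) (a b : ℝ) (ha : 0 < a) (hb : 0 < b)
    (hab : a ≠ b) (hJa : besselJ ν a = 0) (hJb : besselJ ν b = 0) :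
    (a ^ 2 - b ^ 2) * ∫ r in (0 : ℝ)..1, r ^ 3 * besselJ ν (a * r) * besselJ ν (b * r) =
      4 * a * ∫ r in (0 : ℝ)..1, r ^ 2 * besselJ (ν - 1) (a * r) * besselJ ν (b * r) := by
  obtain ⟨n, rfl⟩ := Nat.exists_eq_add_of_le' hν
  rw [Nat.add_sub_cancel]
  have hsq : a ^ 2 ≠ b ^ 2 := (sq_eq_sq₀ ha.le hb.le).not.2 hab
  have ha1 : besselJ (n + 1) (a * 1) = 0 := by rwa [mul_one]
  have hb1 : besselJ (n + 1) (b * 1) = 0 := by rwa [mul_one]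
  have hcube := integral_cube_mul_besselJ_mul_besselJ n a b 1
  rw [integral_mul_besselJ_mul_besselJ_eq_zero hsq ha1 hb1, besselWronskian_eq_zero ha1 hb1,
    ha1] at hcube
  linear_combination hcube
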